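/- Let k ≥ 2 be an integer, let p > 20k be an integer, let 0 < θ < 1/(20k), and let 0 < ε < min(θ²/6, 1/(100k²)). For all sufficiently large n (depending on k, p, θ, ε), if G is an n-vertex W_{2k+1}-free simple graph attaining the maximum spectral radius among all n-vertex W_{2k+1}-free graphs, V(G) = S ⊔ T is a maximum cut of G, P = { v ∈ V(G) : d(v) ≤ (1/2 − 1/p)n }, and M = { v ∈ S : d_S(v) ≥ θn } ∪ { v ∈ T : d_T(v) ≥ θn }, then |M| ≤ 3εn/θ and M \ P = ∅. -/

import Mathlib

/-- The wheel graph on `t` vertices: vertex `0` joined to every vertex of the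
cycle `1, 2, …, t-1` (with `t-1` adjacent to `1`). -/
def wheelGraph (t : ℕ) : SimpleGraph (Fin t) where
  Adj a b := a ≠ b ∧ (a.val = 0 ∨ b.val = 0 ∨ a.val + 1 = b.val ∨ b.val + 1 = a.val ∨
      (a.val = 1 ∧ b.val = t - 1) ∨ (b.val = 1 ∧ a.val = t - 1))
  symm := by
    constructor
    intro a b h
    exact ⟨h.1.symm, by tauto⟩
  loopless := by
    constructor
    intro a h
    exact h.1 rfl

/-- `G` contains a copy of `F`, i.e. a subgraph isomorphic to `F`. -/
def ContainsCopy {α β : Type*} (F : SimpleGraph α) (G : SimpleGraph β) : Prop :=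
  ∃ f : α ↪ β, ∀ a b, F.Adj a b → G.Adj (f a) (f b)

/-- `G` is `W_t`-free: it contains no subgraph isomorphic to the wheel on `t` vertices. -/
def WheelFree (t : ℕ) {n : ℕ} (G : SimpleGraph (Fin n)) : Prop :=
  ¬ ContainsCopy (wheelGraph t) G

/-- The spectral radius of `G`: the largest eigenvalue of its adjacency matrix. -/
noncomputable def lam1 {n : ℕ} (G : SimpleGraph (Fin n)) : ℝ := by
  classical
  exact sSup {μ : ℝ | Module.End.HasEigenvalue (Matrix.toLin' (G.adjMatrix ℝ)) μ}

/-- The number of edges of a graph on a finite vertex type. -/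
noncomputable def edgeCount {V : Type*} [Fintype V] (G : SimpleGraph V) : ℕ := by
  classical
  exact G.edgeFinset.card

/-- The degree of a vertex. -/
noncomputable def deg {n : ℕ} (G : SimpleGraph (Fin n)) (v : Fin n) : ℕ := by
  classical
  exact G.degree v

/-- The number of neighbours of `v` inside the set `A`. -/
noncomputable def degIn {n : ℕ} (G : SimpleGraph (Fin n)) (A : Finset (Fin n)) (v : Fin n) : ℕ := by
  classical
  exact (A.filter fun u => G.Adj v u).card

/-- The number of edges of `G` with one endpoint in `S` and the other outside `S`. -/
noncomputable def cutCount {n : ℕ} (G : SimpleGraph (Fin n)) (S : Finset (Fin n)) : ℕ := by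
  classical
  exact ((Finset.univ : Finset (Fin n × Fin n)).filter
    fun p => G.Adj p.1 p.2 ∧ p.1 ∈ S ∧ p.2 ∉ S).card

/-- `(S, T)` is a maximum cut of `G`. -/
def IsMaxCut {n : ℕ} (G : SimpleGraph (Fin n)) (S T : Finset (Fin n)) : Prop :=
  T = Sᶜ ∧ ∀ S' : Finset (Fin n), cutCount G S' ≤ cutCount G S

/-- `G` attains the maximum spectral radius among all `n`-vertex `W_t`-free graphs. -/
def IsSpexWheel (t : ℕ) {n : ℕ} (G : SimpleGraph (Fin n)) : Prop :=
  WheelFree t G ∧ ∀ H : SimpleGraph (Fin n), WheelFree t H → lam1 H ≤ lam1 G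

/-- `G` attains the maximum number of edges among all `n`-vertex `W_t`-free graphs. -/
def IsExWheel (t : ℕ) {n : ℕ} (G : SimpleGraph (Fin n)) : Prop :=
  WheelFree t G ∧ ∀ H : SimpleGraph (Fin n), WheelFree t H → edgeCount H ≤ edgeCount G

/-!
A `W_{2k+1}`-free graph `G` on `n` vertices has `o(n²)` edges between any two subsets of a
neighbourhood `N(w)`: otherwise, by Kővári–Sós–Turán, `N(w)` spans a `K_{k,k}`, which contains a
`2k`-cycle, and `w` completes the wheel. Let `(S, T)` be a maximum cut of a spectral extremal `G`,
and let `v ∈ S` have `d` neighbours in `S`, hence at least `d` neighbours in `T`.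

* Gershgorin's theorem for the square of the adjacency matrix `A` bounds `λ₁²` by a row sum of `A²`,
  that is, by `∑_{v ∈ N(u)} d(v) = e(N(u), N(u)) + e(N(u), N(u)ᶜ)`. The first term is `o(n²)` and
  the second is the size of a cut, so `λ₁² ≤ e(S, T) + o(n²)`.
* Only `o(n²)` of the at least `d²` pairs between `N(v) ∩ S` and `N(v) ∩ T` are edges, so
  `e(S, T) ≤ |S||T| - d² + o(n²)`.
* The complete bipartite graph between `S` and `T` contains no wheel, so `|S||T| ≤ λ₁²`.

Together `d² = o(n²)`: for large `n` no vertex has `θn` neighbours on its own side, and `M = ∅`.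
-/

open Finset Filter

section KovariSosTuran

variable {α β : Type*} (r : α → β → Prop) [∀ a, DecidablePred (r a)]

theorem card_interedges_eq_sum_card_bipartiteAbove (X : Finset α) (Y : Finset β) :
    #(Rel.interedges r X Y) = ∑ a ∈ X, #(Y.bipartiteAbove r a) := by
  simp only [Rel.interedges, bipartiteAbove, card_filter, sum_product]

theorem card_interedges_eq_sum_card_bipartiteBelow (X : Finset α) (Y : Finset β) :
    #(Rel.interedges r X Y) = ∑ b ∈ Y, #(X.bipartiteBelow r b) := by
  rw [card_interedges_eq_sum_card_bipartiteAbove,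
    sum_card_bipartiteAbove_eq_sum_card_bipartiteBelow]

theorem sum_choose_card_bipartiteBelow (X : Finset α) (Y : Finset β) (s : ℕ) :
    ∑ b ∈ Y, (#(X.bipartiteBelow r b)).choose s =
      ∑ A ∈ X.powersetCard s, #{b ∈ Y | ∀ a ∈ A, r a b} := by
  have hfiber (b : β) : (#(X.bipartiteBelow r b)).choose s =
      #((X.powersetCard s).bipartiteBelow (fun A b => ∀ a ∈ A, r a b) b) := by
    rw [← card_powersetCard]
    congr 1
    ext A
    simp only [mem_powersetCard, mem_bipartiteBelow, subset_iff]
    grind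
  simp_rw [hfiber, ← sum_card_bipartiteAbove_eq_sum_card_bipartiteBelow, bipartiteAbove]

variable {r}

/- The Kővári–Sós–Turán bound. With `d ↦ (d - s) ^ (s + 1)` as a minorant of
`d.descFactorial (s + 1)`, the power mean inequality replaces convexity of binomials. -/
theorem pow_card_interedges_sub_le {X : Finset α} {Y : Finset β} {s c : ℕ}
    (h : ∀ A ∈ X.powersetCard (s + 1), #{b ∈ Y | ∀ a ∈ A, r a b} ≤ c) :
    (#(Rel.interedges r X Y) - #Y * s) ^ (s + 1) ≤ #Y ^ s * (#X ^ (s + 1) * c) := by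
  set d : β → ℕ := fun b => #(X.bipartiteBelow r b)
  have hsub : #(Rel.interedges r X Y) - #Y * s ≤ ∑ b ∈ Y, (d b - s) := by
    have := sum_le_sum fun b (_ : b ∈ Y) => (le_tsub_add : d b ≤ d b - s + s)
    rw [sum_add_distrib, sum_const, smul_eq_mul] at this
    rw [card_interedges_eq_sum_card_bipartiteBelow]
    lia
  have hchoose : ∑ b ∈ Y, (d b).choose (s + 1) ≤ (#X).choose (s + 1) * c := by
    rw [sum_choose_card_bipartiteBelow, ← card_powersetCard, ← smul_eq_mul]
    exact sum_le_card_nsmul _ _ _ h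
  have hpow : ∑ b ∈ Y, (d b - s) ^ (s + 1) ≤ #X ^ (s + 1) * c := calc
    _ ≤ ∑ b ∈ Y, (d b).descFactorial (s + 1) := sum_le_sum fun b _ => by
      simpa using Nat.pow_sub_le_descFactorial (d b) (s + 1)
    _ = (s + 1).factorial * ∑ b ∈ Y, (d b).choose (s + 1) := by
      simp only [Nat.descFactorial_eq_factorial_mul_choose, mul_sum]
    _ ≤ (s + 1).factorial * ((#X).choose (s + 1) * c) := by gcongr
    _ = (#X).descFactorial (s + 1) * c := by
      rw [Nat.descFactorial_eq_factorial_mul_choose, mul_assoc]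
    _ ≤ #X ^ (s + 1) * c := by gcongr; exact Nat.descFactorial_le_pow _ _
  calc
    _ ≤ (∑ b ∈ Y, (d b - s)) ^ (s + 1) := by gcongr
    _ ≤ #Y ^ s * ∑ b ∈ Y, (d b - s) ^ (s + 1) :=
      pow_sum_le_card_mul_sum_pow (fun _ _ => Nat.zero_le _) s
    _ ≤ _ := by gcongr

theorem card_interedges_add_card_mul_card_le {X S : Finset α} {Y T : Finset β}
    (hX : X ⊆ S) (hY : Y ⊆ T) :
    #(Rel.interedges r S T) + #X * #Y ≤ #(Rel.interedges r X Y) + #S * #T := by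
  classical
  have hsub : Rel.interedges r S T ⊆ Rel.interedges r X Y ∪ (S ×ˢ T \ X ×ˢ Y) := by
    rintro ⟨a, b⟩ he
    simp only [mem_union, Finset.mem_sdiff, Finset.mem_product, Rel.mem_interedges_iff] at he ⊢
    tauto
  have hcard := (card_le_card hsub).trans (card_union_le _ _)
  have hsdiff := card_sdiff_add_card_eq_card (product_subset_product hX hY)
  rw [card_product, card_product] at hsdiff
  lia

theorem exists_isCompleteBetween_of_lt {V : Type*} {G : SimpleGraph V} [DecidableRel G.Adj]
    {X Y : Finset V} {s : ℕ}
    (h : #Y ^ s * (#X ^ (s + 1) * s) < (#(G.interedges X Y) - #Y * s) ^ (s + 1)) :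
    ∃ A ⊆ X, ∃ B ⊆ Y, #A = s + 1 ∧ #B = s + 1 ∧ G.IsCompleteBetween A B := by
  classical
  contrapose! h
  refine pow_card_interedges_sub_le fun A hA => ?_
  obtain ⟨hAX, hAcard⟩ := mem_powersetCard.1 hA
  by_contra! hlt
  obtain ⟨B, hB, hBcard⟩ := exists_subset_card_eq hlt
  refine h A hAX B (hB.trans (filter_subset _ _)) hAcard hBcard fun a ha b hb => ?_
  exact (mem_filter.1 (hB hb)).2 a ha

theorem eventually_exists_isCompleteBetween (k : ℕ) {δ : ℝ} (hδ : 0 < δ) :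
    ∀ᶠ n : ℕ in atTop, ∀ (G : SimpleGraph (Fin n)) [DecidableRel G.Adj] (X Y : Finset (Fin n)),
      δ * n ^ 2 ≤ #(G.interedges X Y) →
        ∃ A ⊆ X, ∃ B ⊆ Y, #A = k ∧ #B = k ∧ G.IsCompleteBetween A B := by
  obtain - | s := k
  · refine .of_forall fun n G _ X Y _ => ⟨∅, empty_subset _, ∅, empty_subset _, ?_⟩
    simp [SimpleGraph.IsCompleteBetween]
  have hlin : ∀ᶠ n : ℕ in atTop, 2 * s / δ ≤ n := tendsto_natCast_atTop_atTop.eventually_ge_atTop _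
  have hpow : ∀ᶠ n : ℕ in atTop, s / (δ / 2) ^ (s + 1) < n :=
    tendsto_natCast_atTop_atTop.eventually_gt_atTop _
  filter_upwards [hlin, hpow, eventually_gt_atTop 0] with n hlin hpow hn G _ X Y hXY
  rw [div_le_iff₀ hδ] at hlin
  rw [div_lt_iff₀' (by positivity)] at hpow
  have hX : #X ≤ n := by simpa using card_le_univ X
  have hY : #Y ≤ n := by simpa using card_le_univ Y
  set e : ℕ := #(G.interedges X Y)
  have hlower : δ / 2 * (n : ℝ) ^ 2 ≤ (e - n * s : ℕ) := by
    have h : (e : ℝ) ≤ (e - n * s : ℕ) + n * s := by exact_mod_cast le_tsub_add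
    nlinarith
  have hlt : n ^ s * (n ^ (s + 1) * s) < (e - n * s) ^ (s + 1) := by
    have : (n : ℝ) ^ s * (n ^ (s + 1) * s) < ((e - n * s : ℕ) : ℝ) ^ (s + 1) := calc
      _ < (n : ℝ) ^ s * (n ^ (s + 1) * ((δ / 2) ^ (s + 1) * n)) := by gcongr
      _ = (δ / 2 * (n : ℝ) ^ 2) ^ (s + 1) := by ring
      _ ≤ ((e - n * s : ℕ) : ℝ) ^ (s + 1) := by gcongr
    exact_mod_cast this
  refine exists_isCompleteBetween_of_lt ?_
  calc
    _ ≤ n ^ s * (n ^ (s + 1) * s) := by gcongr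
    _ < (e - n * s) ^ (s + 1) := hlt
    _ ≤ (e - #Y * s) ^ (s + 1) := by gcongr

end KovariSosTuran

section Wheel

theorem even_iff_not_even_of_wheelGraph_adj {k : ℕ} {i j : Fin (2 * k)}
    (h : (wheelGraph (2 * k + 1)).Adj i.succ j.succ) : Even (i : ℕ) ↔ ¬ Even (j : ℕ) := by
  simp only [wheelGraph, Fin.val_succ] at h
  simp only [Nat.even_iff]
  lia

theorem exists_alternating_injective {V : Type*} {k : ℕ} {A B : Finset V} (hA : #A = k)
    (hB : #B = k) (hAB : Disjoint A B) :
    ∃ f : Fin (2 * k) → V, f.Injective ∧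
      (∀ i : Fin (2 * k), Even (i : ℕ) → f i ∈ A) ∧
        ∀ i : Fin (2 * k), ¬ Even (i : ℕ) → f i ∈ B := by
  let a := (A.equivFinOfCardEq hA).symm
  let b := (B.equivFinOfCardEq hB).symm
  let half (i : Fin (2 * k)) : Fin k := ⟨i / 2, by lia⟩
  let f (i : Fin (2 * k)) : V := if Even (i : ℕ) then a (half i) else b (half i)
  have hfA (i : Fin (2 * k)) (hi : Even (i : ℕ)) : f i = a (half i) := if_pos hi
  have hfB (i : Fin (2 * k)) (hi : ¬ Even (i : ℕ)) : f i = b (half i) := if_neg hi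
  have hne {x y : V} (hx : x ∈ A) (hy : y ∈ B) : x ≠ y := fun h =>
    Finset.disjoint_left.1 hAB hx (h ▸ hy)
  refine ⟨f, fun i j hij => ?_, fun i hi => hfA i hi ▸ (a _).2, fun i hi => hfB i hi ▸ (b _).2⟩
  by_cases hi : Even (i : ℕ) <;> by_cases hj : Even (j : ℕ)
  · rw [hfA i hi, hfA j hj, Subtype.coe_inj, a.apply_eq_iff_eq, Fin.mk.injEq] at hij
    grind
  · rw [hfA i hi, hfB j hj] at hij
    exact (hne (a _).2 (b _).2 hij).elim
  · rw [hfB i hi, hfA j hj] at hij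
    exact (hne (a _).2 (b _).2 hij.symm).elim
  · rw [hfB i hi, hfB j hj, Subtype.coe_inj, b.apply_eq_iff_eq, Fin.mk.injEq] at hij
    grind

theorem containsCopy_wheelGraph_of_isCompleteBetween {V : Type*} {G : SimpleGraph V} {k : ℕ}
    {w : V} {A B : Finset V} (hA : #A = k) (hB : #B = k) (hwA : ∀ a ∈ A, G.Adj w a)
    (hwB : ∀ b ∈ B, G.Adj w b) (hAB : G.IsCompleteBetween A B) :
    ContainsCopy (wheelGraph (2 * k + 1)) G := by
  obtain ⟨f, hf, hfA, hfB⟩ :=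
    exists_alternating_injective hA hB (Finset.disjoint_coe.1 hAB.disjoint)
  have hhub (i : Fin (2 * k)) : G.Adj w (f i) := by
    by_cases hi : Even (i : ℕ)
    exacts [hwA _ (hfA i hi), hwB _ (hfB i hi)]
  have hinj : (Fin.cons w f : Fin (2 * k + 1) → V).Injective :=
    Fin.cons_injective_iff.2 ⟨fun ⟨i, hi⟩ => (hhub i).ne hi.symm, hf⟩
  refine ⟨⟨_, hinj⟩, fun i j h => ?_⟩
  cases i using Fin.cases with
  | zero =>
    cases j using Fin.cases with
    | zero => exact (h.ne rfl).elim
    | succ j => exact hhub j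
  | succ i =>
    cases j using Fin.cases with
    | zero => exact (hhub i).symm
    | succ j =>
      have hparity := even_iff_not_even_of_wheelGraph_adj h
      by_cases hi : Even (i : ℕ)
      · exact hAB (hfA i hi) (hfB j (hparity.1 hi))
      · exact (hAB (hfA j (not_not.1 (mt hparity.2 hi))) (hfB i hi)).symm

theorem wheelFree_of_cliqueFree {t n : ℕ} (ht : 3 ≤ t) {G : SimpleGraph (Fin n)}
    (hG : G.CliqueFree 3) : WheelFree t G := by
  rintro ⟨f, hf⟩
  refine hG {f ⟨0, by lia⟩, f ⟨1, by lia⟩, f ⟨2, by lia⟩} (SimpleGraph.is3Clique_triple_iff.2 ?_)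
  refine ⟨hf _ _ ?_, hf _ _ ?_, hf _ _ ?_⟩ <;> simp [wheelGraph]

end Wheel

section MaxCut

variable {n : ℕ} {G : SimpleGraph (Fin n)} {S T : Finset (Fin n)}

theorem cutCount_eq_card_interedges (G : SimpleGraph (Fin n)) [DecidableRel G.Adj]
    (S : Finset (Fin n)) : cutCount G S = #(G.interedges S Sᶜ) := by
  classical
  unfold cutCount
  congr 1
  ext ⟨a, b⟩
  simp only [mem_filter, mem_univ, true_and, SimpleGraph.mk_mem_interedges_iff, mem_compl]
  tauto

theorem cutCount_compl (G : SimpleGraph (Fin n)) (S : Finset (Fin n)) :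
    cutCount G Sᶜ = cutCount G S := by
  classical
  rw [cutCount_eq_card_interedges, cutCount_eq_card_interedges, compl_compl]
  have hsymm : Std.Symm G.Adj := G.symm
  exact Rel.card_interedges_comm _ _

theorem IsMaxCut.symm (h : IsMaxCut G S T) : IsMaxCut G T S := by
  obtain ⟨rfl, hmax⟩ := h
  exact ⟨(compl_compl S).symm, fun S' => (hmax S').trans_eq (cutCount_compl G S).symm⟩

theorem degIn_eq_card_filter (G : SimpleGraph (Fin n)) [DecidableRel G.Adj]
    (A : Finset (Fin n)) (v : Fin n) : degIn G A v = #{u ∈ A | G.Adj v u} := by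
  unfold degIn
  congr!

theorem cutCount_erase_add_degIn {v : Fin n} (hv : v ∈ S) :
    cutCount G (S.erase v) + degIn G Sᶜ v = cutCount G S + degIn G S v := by
  classical
  have hnotMem : v ∉ Sᶜ := by simpa using hv
  have hfilter : #((S.erase v).bipartiteBelow G.Adj v) = degIn G S v := by
    rw [degIn_eq_card_filter, bipartiteBelow, filter_erase, erase_eq_of_notMem (by simp)]
    simp only [G.adj_comm v]
  calc cutCount G (S.erase v) + degIn G Sᶜ v
      = #(G.interedges (S.erase v) Sᶜ) + degIn G S v + degIn G Sᶜ v := by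
        rw [cutCount_eq_card_interedges, SimpleGraph.interedges, compl_erase,
          card_interedges_eq_sum_card_bipartiteBelow, sum_insert hnotMem, hfilter,
          ← card_interedges_eq_sum_card_bipartiteBelow, add_comm (degIn G S v)]
        rfl
    _ = cutCount G S + degIn G S v := by
        rw [cutCount_eq_card_interedges, SimpleGraph.interedges, SimpleGraph.interedges,
          card_interedges_eq_sum_card_bipartiteAbove, card_interedges_eq_sum_card_bipartiteAbove,
          ← sum_erase_add _ _ hv, degIn_eq_card_filter G Sᶜ v, bipartiteAbove, add_right_comm]

theorem IsMaxCut.degIn_le (h : IsMaxCut G S T) {v : Fin n} (hv : v ∈ S) :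
    degIn G S v ≤ degIn G T v := by
  obtain ⟨rfl, hmax⟩ := h
  have hmove := cutCount_erase_add_degIn (G := G) hv
  have hle := hmax (S.erase v)
  lia

end MaxCut

section SpectralRadius

theorem exists_sq_le_sum_degree_of_hasEigenvalue {V : Type*} [Fintype V] [DecidableEq V]
    {G : SimpleGraph V} [DecidableRel G.Adj] {μ : ℝ}
    (hμ : Module.End.HasEigenvalue (Matrix.toLin' (G.adjMatrix ℝ)) μ) :
    ∃ u, μ ^ 2 ≤ ∑ v ∈ G.neighborFinset u, (G.degree v : ℝ) := by
  have hsq := hμ.pow 2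
  rw [← Matrix.toLin'_pow] at hsq
  obtain ⟨u, hu⟩ := eigenvalue_mem_ball hsq
  set B := G.adjMatrix ℝ ^ 2 with hB
  have hB0 (v : V) : 0 ≤ B u v := by
    rw [hB, SimpleGraph.adjMatrix_pow_apply_eq_card_walk]
    positivity
  refine ⟨u, ?_⟩
  calc μ ^ 2 ≤ B u u + ∑ v ∈ univ.erase u, B u v := by
        rw [Metric.mem_closedBall, Real.dist_eq] at hu
        simp only [Real.norm_eq_abs, abs_of_nonneg (hB0 _)] at hu
        linarith [le_abs_self (μ ^ 2 - B u u)]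
    _ = ∑ v, B u v := add_sum_erase _ _ (mem_univ u)
    _ = ∑ v ∈ G.neighborFinset u, (G.degree v : ℝ) := by
        simp only [hB, sq, SimpleGraph.adjMatrix_mul_apply]
        rw [sum_comm]
        simp [SimpleGraph.adjMatrix_apply, SimpleGraph.degree, SimpleGraph.neighborFinset_eq_filter]

theorem sum_degree_eq_card_interedges_add {V : Type*} [Fintype V] [DecidableEq V]
    (G : SimpleGraph V) [DecidableRel G.Adj] (A : Finset V) :
    ∑ v ∈ A, G.degree v = #(G.interedges A A) + #(G.interedges A Aᶜ) := by
  simp only [SimpleGraph.interedges, card_interedges_eq_sum_card_bipartiteAbove,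
    ← sum_add_distrib, bipartiteAbove, card_filter, sum_add_sum_compl,
    ← SimpleGraph.card_neighborFinset_eq_degree, SimpleGraph.neighborFinset_eq_filter]

variable {n : ℕ} {G : SimpleGraph (Fin n)}

theorem lam1_eq_sSup (G : SimpleGraph (Fin n)) [DecidableRel G.Adj] :
    lam1 G = sSup {μ | Module.End.HasEigenvalue (Matrix.toLin' (G.adjMatrix ℝ)) μ} := by
  unfold lam1
  congr!

theorem le_lam1_of_hasEigenvalue [DecidableRel G.Adj] {μ : ℝ}
    (hμ : Module.End.HasEigenvalue (Matrix.toLin' (G.adjMatrix ℝ)) μ) : μ ≤ lam1 G := by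
  rw [lam1_eq_sSup]
  exact le_csSup (Module.End.finite_hasEigenvalue _).bddAbove hμ

theorem hasEigenvalue_lam1 [NeZero n] (G : SimpleGraph (Fin n)) [DecidableRel G.Adj] :
    Module.End.HasEigenvalue (Matrix.toLin' (G.adjMatrix ℝ)) (lam1 G) := by
  have hne : {μ | Module.End.HasEigenvalue (Matrix.toLin' (G.adjMatrix ℝ)) μ}.Nonempty := by
    refine ⟨(G.isHermitian_adjMatrix ℝ).eigenvalues 0, ?_⟩
    rw [Set.mem_ofPred_eq, Module.End.hasEigenvalue_iff_mem_spectrum, Matrix.spectrum_toLin']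
    exact (G.isHermitian_adjMatrix ℝ).eigenvalues_mem_spectrum_real 0
  rw [lam1_eq_sSup]
  exact hne.csSup_mem (Module.End.finite_hasEigenvalue _)

theorem exists_lam1_sq_le_card_interedges_add_cutCount [NeZero n] (G : SimpleGraph (Fin n))
    [DecidableRel G.Adj] : ∃ u, lam1 G ^ 2 ≤
      #(G.interedges (G.neighborFinset u) (G.neighborFinset u)) +
        cutCount G (G.neighborFinset u) := by
  obtain ⟨u, hu⟩ := exists_sq_le_sum_degree_of_hasEigenvalue (hasEigenvalue_lam1 G)
  refine ⟨u, hu.trans_eq ?_⟩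
  rw [cutCount_eq_card_interedges]
  exact_mod_cast sum_degree_eq_card_interedges_add G _

theorem hasEigenvalue_between_compl {V : Type*} [Fintype V] [DecidableEq V] {S : Finset V}
    [DecidableRel ((⊤ : SimpleGraph V).between S Sᶜ).Adj] (hS : S.Nonempty)
    (hSc : Sᶜ.Nonempty) :
    Module.End.HasEigenvalue (Matrix.toLin' (((⊤ : SimpleGraph V).between S Sᶜ).adjMatrix ℝ))
      √(#S * #Sᶜ) := by
  let x : V → ℝ := fun v => if v ∈ S then √(#Sᶜ : ℝ) else √(#S : ℝ)
  have hin {v : V} (hv : v ∈ S) : x v = √(#Sᶜ : ℝ) := if_pos hv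
  have hout {v : V} (hv : v ∉ S) : x v = √(#S : ℝ) := if_neg hv
  have hneighbor (v : V) : ((⊤ : SimpleGraph V).between S Sᶜ).neighborFinset v =
      if v ∈ S then Sᶜ else S := by
    ext u
    rw [SimpleGraph.mem_neighborFinset, SimpleGraph.between_adj, SimpleGraph.top_adj]
    simp only [Set.mem_compl_iff, mem_coe]
    split_ifs <;> grind [mem_compl]
  refine Module.End.hasEigenvalue_of_hasEigenvector (x := x) ⟨?_, ?_⟩
  · rw [Module.End.mem_eigenspace_iff, Matrix.toLin'_apply]
    ext v
    rw [SimpleGraph.adjMatrix_mulVec_apply, hneighbor, Real.sqrt_mul (by positivity)]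
    by_cases hv : v ∈ S
    · rw [if_pos hv, sum_congr rfl fun u hu => hout (mem_compl.1 hu), sum_const, nsmul_eq_mul,
        Pi.smul_apply, smul_eq_mul, hin hv, mul_assoc, Real.mul_self_sqrt (by positivity), mul_comm]
    · rw [if_neg hv, sum_congr rfl fun u hu => hin hu, sum_const, nsmul_eq_mul, Pi.smul_apply,
        smul_eq_mul, hout hv, mul_right_comm, Real.mul_self_sqrt (by positivity)]
  · obtain ⟨s, hs⟩ := hS
    refine Function.ne_iff.2 ⟨s, ?_⟩
    have := hSc.card_pos
    rw [hin hs, Pi.zero_apply]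
    positivity

theorem IsSpexWheel.card_mul_card_compl_le_lam1_sq {t : ℕ} (hG : IsSpexWheel t G) (ht : 3 ≤ t)
    (S : Finset (Fin n)) : (#S * #Sᶜ : ℝ) ≤ lam1 G ^ 2 := by
  classical
  obtain rfl | hS := S.eq_empty_or_nonempty
  · simpa using sq_nonneg (lam1 G)
  obtain hSc | hSc := Sᶜ.eq_empty_or_nonempty
  · simpa [hSc] using sq_nonneg (lam1 G)
  have hfree : WheelFree t ((⊤ : SimpleGraph (Fin n)).between S Sᶜ) :=
    wheelFree_of_cliqueFree ht <|
      (SimpleGraph.between_isBipartite disjoint_compl_right).cliqueFree (by simp)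
  have hle := (le_lam1_of_hasEigenvalue (hasEigenvalue_between_compl hS hSc)).trans (hG.2 _ hfree)
  exact (Real.sqrt_le_left ((Real.sqrt_nonneg _).trans hle)).1 hle

end SpectralRadius

section Stability

variable {k : ℕ} {δ : ℝ}

theorem eventually_card_interedges_neighborFinset_lt (hδ : 0 < δ) :
    ∀ᶠ n : ℕ in atTop, ∀ (G : SimpleGraph (Fin n)) [DecidableRel G.Adj],
      WheelFree (2 * k + 1) G → ∀ w X Y, X ⊆ G.neighborFinset w → Y ⊆ G.neighborFinset w →
        (#(G.interedges X Y) : ℝ) < δ * n ^ 2 := by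
  filter_upwards [eventually_exists_isCompleteBetween k hδ] with n hn G _ hG w X Y hX hY
  by_contra! hXY
  obtain ⟨A, hA, B, hB, hAcard, hBcard, hAB⟩ := hn G X Y hXY
  exact hG <| containsCopy_wheelGraph_of_isCompleteBetween hAcard hBcard
    (fun a ha => (G.mem_neighborFinset w a).1 (hX (hA ha)))
    (fun b hb => (G.mem_neighborFinset w b).1 (hY (hB hb))) hAB

theorem eventually_lam1_sq_lt_add_cutCount (hδ : 0 < δ) :
    ∀ᶠ n : ℕ in atTop, ∀ G : SimpleGraph (Fin n), WheelFree (2 * k + 1) G →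
      ∀ S T, IsMaxCut G S T → lam1 G ^ 2 < δ * n ^ 2 + cutCount G S := by
  classical
  filter_upwards [eventually_card_interedges_neighborFinset_lt hδ, eventually_ne_atTop 0]
    with n hn hn0 G hG S T h
  have : NeZero n := ⟨hn0⟩
  obtain ⟨u, hu⟩ := exists_lam1_sq_le_card_interedges_add_cutCount G
  have hedges := hn G hG u _ _ subset_rfl subset_rfl
  have hcut : (cutCount G (G.neighborFinset u) : ℝ) ≤ cutCount G S := by exact_mod_cast h.2 _
  linarith

theorem eventually_cutCount_add_degIn_sq_lt (hδ : 0 < δ) :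
    ∀ᶠ n : ℕ in atTop, ∀ G : SimpleGraph (Fin n), WheelFree (2 * k + 1) G →
      ∀ S T, IsMaxCut G S T → ∀ v ∈ S,
        (cutCount G S + degIn G S v ^ 2 : ℝ) < δ * n ^ 2 + #S * #T := by
  classical
  filter_upwards [eventually_card_interedges_neighborFinset_lt hδ] with n hn G hG S T h v hv
  have hnbr (A : Finset (Fin n)) : {u ∈ A | G.Adj v u} ⊆ G.neighborFinset v := fun u hu => by
    simpa using (mem_filter.1 hu).2
  have hedges := hn G hG v _ _ (hnbr S) (hnbr T)
  have hcut := card_interedges_add_card_mul_card_le (r := G.Adj)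
    (filter_subset (G.Adj v) S) (filter_subset (G.Adj v) T)
  rw [← degIn_eq_card_filter, ← degIn_eq_card_filter] at hcut
  have hsq : degIn G S v ^ 2 ≤ degIn G S v * degIn G T v := by
    rw [sq]
    exact Nat.mul_le_mul_left _ (h.degIn_le hv)
  obtain ⟨rfl, -⟩ := h
  rw [cutCount_eq_card_interedges]
  have : (#(G.interedges S Sᶜ) + degIn G S v ^ 2 : ℝ) ≤
      #(G.interedges {u ∈ S | G.Adj v u} {u ∈ Sᶜ | G.Adj v u}) + #S * #Sᶜ := by
    exact_mod_cast (Nat.add_le_add_left hsq _).trans hcut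
  linarith

theorem eventually_degIn_lt_of_isSpexWheel (hk : k ≠ 0) {θ : ℝ} (hθ : 0 < θ) :
    ∀ᶠ n : ℕ in atTop, ∀ G : SimpleGraph (Fin n), IsSpexWheel (2 * k + 1) G →
      ∀ S T, IsMaxCut G S T → ∀ v ∈ S, degIn G S v < θ * n := by
  have hδ : 0 < θ ^ 2 / 2 := by positivity
  filter_upwards [eventually_lam1_sq_lt_add_cutCount hδ, eventually_cutCount_add_degIn_sq_lt hδ]
    with n hlam hcut G hG S T h v hv
  have hupper := hlam G hG.1 S T h
  have hmissing := hcut G hG.1 S T h v hv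
  have hlower := hG.card_mul_card_compl_le_lam1_sq (by lia) S
  rw [← h.1] at hlower
  exact lt_of_pow_lt_pow_left₀ 2 (by positivity) (by linarith)

end Stability

theorem M_small_and_in_P_general {k : ℕ} (hk : k ≠ 0) {θ : ℝ} (hθ : 0 < θ) :
    ∀ᶠ n : ℕ in atTop, ∀ G : SimpleGraph (Fin n), IsSpexWheel (2 * k + 1) G →
      ∀ S T : Finset (Fin n), IsMaxCut G S T →
        {v : Fin n | (v ∈ S ∧ θ * n ≤ degIn G S v) ∨ (v ∈ T ∧ θ * n ≤ degIn G T v)} = ∅ := by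
  filter_upwards [eventually_degIn_lt_of_isSpexWheel hk hθ] with n hn G hG S T h
  refine Set.eq_empty_of_forall_notMem ?_
  rintro v (⟨hv, hle⟩ | ⟨hv, hle⟩)
  · exact (hn G hG S T h v hv).not_ge hle
  · exact (hn G hG T S h.symm v hv).not_ge hle

/-- The set `M` of vertices with large internal degree satisfies
`|M| ≤ 3εn/θ` and `M \ P = ∅`. -/
theorem M_small_and_in_P (k p : ℕ) (θ ε : ℝ) (hk : 2 ≤ k) (hp : 20 * k < p)
    (hθ0 : 0 < θ) (hθ : θ < 1 / (20 * (k : ℝ))) (hε0 : 0 < ε)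
    (hε : ε < min (θ ^ 2 / 6) (1 / (100 * (k : ℝ) ^ 2))) :
    ∃ N : ℕ, ∀ n : ℕ, N ≤ n → ∀ G : SimpleGraph (Fin n), IsSpexWheel (2 * k + 1) G →
      ∀ S T : Finset (Fin n), IsMaxCut G S T →
      ∀ P M : Set (Fin n),
        P = {v : Fin n | (deg G v : ℝ) ≤ (1 / 2 - 1 / (p : ℝ)) * (n : ℝ)} →
        M = {v : Fin n | (v ∈ S ∧ θ * (n : ℝ) ≤ (degIn G S v : ℝ)) ∨
              (v ∈ T ∧ θ * (n : ℝ) ≤ (degIn G T v : ℝ))} →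
        (M.ncard : ℝ) ≤ 3 * ε * (n : ℝ) / θ ∧ M \ P = ∅ := by
  obtain ⟨N, hN⟩ := eventually_atTop.1 (M_small_and_in_P_general (by lia : k ≠ 0) hθ0)
  refine ⟨N, fun n hn G hG S T h P M _ hM => ?_⟩
  rw [hM, hN n hn G hG S T h, Set.ncard_empty, Nat.cast_zero, Set.empty_sdiff]
  exact ⟨by positivity, rfl⟩
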